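/- arXiv:2205.08388 — 2 statements merged into one kernel-verified Lean document; each statement's English description precedes it below -/
import Mathlib

section
/- Let X be a Hausdorff topological space equipped with its Borel σ-algebra, let T > 0, let 𝒳 = C([0,T];X) be the space of continuous maps from [0,T] into X with the compact-open topology and its Borel σ-algebra, let Π₀ : 𝒳 → X denote evaluation at time 0, and let X₀ be a Borel subset of X. Let 𝒰 ⊆ 𝒳 satisfy: (H1′) Π₀(𝒰) ⊇ X₀; (H2′) there exists a family 𝒦′(X₀) of compact subsets of X₀ such that every inner regular Borel probability measure μ₀ on X with μ₀(X₀) = 1 satisfies μ₀(A) = sup{ μ₀(K) : K ∈ 𝒦′(X₀), K ⊆ A } for every Borel set A ⊆ X; (H3′) for every K ∈ 𝒦′(X₀) the set Π₀⁻¹(K) ∩ 𝒰 is compact in 𝒳. Then for every inner regular Borel probability measure μ₀ on X with μ₀(X₀) = 1 there exists a 𝒰-trajectory statistical solution ρ on 𝒳 whose pushforward under Π₀ equals μ₀. -/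
open MeasureTheory Set

/-- A Borel (probability) measure is inner regular: the measure of every
measurable set is the supremum of the measures of its compact subsets. -/
def InnerRegularMeasure {Z : Type*} [TopologicalSpace Z] [MeasurableSpace Z]
    (μ : Measure Z) : Prop :=
  ∀ A : Set Z, MeasurableSet A → μ A = ⨆ (K : Set Z) (_ : IsCompact K) (_ : K ⊆ A), μ K

/-- A `𝒰`-trajectory statistical solution: an inner regular Borel probability
measure carried by a Borel subset of `𝒰`. -/
def IsTrajectoryStatSol {𝒳 : Type*} [TopologicalSpace 𝒳] [MeasurableSpace 𝒳]
    (𝒰 : Set 𝒳) (ρ : Measure 𝒳) : Prop :=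
  IsProbabilityMeasure ρ ∧ InnerRegularMeasure ρ ∧
    ∃ 𝒱 : Set 𝒳, 𝒱 ⊆ 𝒰 ∧ MeasurableSet 𝒱 ∧ ρ 𝒱 = 1

/-!
Write `f` for evaluation at time `0`. A finite inner regular measure carried by `f '' C`, with `C`
compact, lifts to `C`: composition with `f` embeds `C(f '' C)` into `C(C)` as a cofinal subspace
that detects positivity, so integration against the measure extends to a positive functional on
`C(C)` by M. Riesz's theorem, and the Riesz–Markov–Kakutani measure of the extension is the lift.
Summing the lifts of the pieces of a countable partition allows `C` to be σ-compact. The second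
hypothesis provides countably many sets of the compact family whose union has full measure, and
their preimages in `𝒰` form such a `C`.
-/

open scoped CompactlySupported

theorem innerRegularMeasure_iff_innerRegular {Z : Type*} [TopologicalSpace Z] [MeasurableSpace Z]
    {μ : Measure Z} : InnerRegularMeasure μ ↔ μ.InnerRegular := by
  refine ⟨fun h ↦ ⟨fun A hA r hr ↦ ?_⟩, fun _ A hA ↦ ?_⟩
  · rw [h A hA] at hr
    simp only [lt_iSup_iff] at hr
    obtain ⟨K, hK, hKA, hrK⟩ := hr
    exact ⟨K, hKA, hK, hrK⟩
  · rw [hA.measure_eq_iSup_isCompact]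
    exact iSup_congr fun K ↦ iSup_comm

theorem innerRegular_comap_of_measurableEmbedding {α β : Type*} [TopologicalSpace α]
    [TopologicalSpace β] [MeasurableSpace α] [MeasurableSpace β] {f : α → β}
    (hf : Topology.IsInducing f) (hfm : MeasurableEmbedding f) (μ : Measure β) [μ.InnerRegular] :
    (μ.comap f).InnerRegular where
  innerRegular := Measure.InnerRegular.innerRegular.comap hfm
    (fun _ hU ↦ hfm.measurableSet_image' hU)
    fun _ hK_range hK ↦ hf.isCompact_preimage' hK hK_range

theorem measurableSet_of_isSigmaCompact {Z : Type*} [TopologicalSpace Z] [T2Space Z]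
    [MeasurableSpace Z] [OpensMeasurableSpace Z] {S : Set Z} (hS : IsSigmaCompact S) :
    MeasurableSet S := by
  obtain ⟨C, hC, rfl⟩ := hS
  exact .iUnion fun n ↦ (hC n).measurableSet

theorem exists_countable_subset_iSup_measure_le {α : Type*} [MeasurableSpace α] (μ : Measure α)
    (𝒦 : Set (Set α)) :
    ∃ S ⊆ 𝒦, S.Countable ∧ ⨆ K ∈ 𝒦, μ K ≤ μ (⋃₀ S) := by
  rcases 𝒦.eq_empty_or_nonempty with rfl | h𝒦
  · exact ⟨∅, Subset.rfl, countable_empty, by simp⟩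
  obtain ⟨u, -, hu_lim, hu_mem⟩ := exists_seq_tendsto_sSup (h𝒦.image μ) (OrderTop.bddAbove _)
  choose K hK hKu using hu_mem
  refine ⟨range K, range_subset_iff.2 hK, countable_range K, ?_⟩
  rw [← sSup_image]
  refine le_of_tendsto' hu_lim fun n ↦ ?_
  rw [← hKu n]
  exact measure_mono (subset_sUnion_of_mem (mem_range_self n))

theorem exists_positiveLinearMap_comp_eq {E F : Type*}
    [AddCommGroup E] [PartialOrder E] [IsOrderedAddMonoid E] [Module ℝ E]
    [AddCommGroup F] [PartialOrder F] [IsOrderedAddMonoid F] [Module ℝ F] [PosSMulMono ℝ F]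
    (P : E →ₗ[ℝ] F) (hP_reflect : ∀ x, 0 ≤ P x → 0 ≤ x) (hP_cofinal : ∀ y, ∃ x, y ≤ P x)
    (L : E →ₚ[ℝ] ℝ) :
    ∃ G : F →ₚ[ℝ] ℝ, ∀ x, G (P x) = L x := by
  have hP_inj : Function.Injective P := by
    refine (injective_iff_map_eq_zero P).2 fun x hx ↦ le_antisymm ?_ (hP_reflect x hx.ge)
    exact neg_nonneg.1 (hP_reflect (-x) (by rw [map_neg, hx, neg_zero]))
  let e := LinearEquiv.ofInjective P hP_inj
  let L' : F →ₗ.[ℝ] ℝ := ⟨P.range, L.toLinearMap ∘ₗ e.symm.toLinearMap⟩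
  have hL' (x : E) : L' (e x) = L x := congrArg L (e.symm_apply_apply x)
  obtain ⟨G, hG_ext, hG_nonneg⟩ := riesz_extension (PointedCone.positive ℝ F) L'
    (fun y hy ↦ by
      obtain ⟨x, rfl⟩ := e.surjective y
      rw [hL']
      exact L.map_nonneg (hP_reflect x hy))
    (fun y ↦ by
      obtain ⟨x, hx⟩ := hP_cofinal (-y)
      exact ⟨e x, neg_le_iff_add_nonneg.1 hx⟩)
  exact ⟨.mk₀ G hG_nonneg, fun x ↦ (hG_ext (e x)).trans (hL' x)⟩

section Lift

variable {X Y : Type*} [TopologicalSpace X] [TopologicalSpace Y]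

theorem exists_positiveLinearMap_comp_cocompactMap_eq [CompactSpace Y] (g : CocompactMap Y X)
    (hg : Function.Surjective g) (L : C_c(X, ℝ) →ₚ[ℝ] ℝ) :
    ∃ G : C_c(Y, ℝ) →ₚ[ℝ] ℝ, ∀ h : C_c(X, ℝ), G (h.comp g) = L h := by
  have : CompactSpace X := hg.compactSpace g.continuous
  have : PosSMulMono ℝ C_c(Y, ℝ) := ⟨fun _ hc _ _ h y ↦ mul_le_mul_of_nonneg_left (h y) hc⟩
  refine exists_positiveLinearMap_comp_eq
    (CompactlySupportedContinuousMap.compLinearMap g) (fun h hh ↦ hg.forall.2 hh)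
    (fun h ↦ ⟨CompactlySupportedContinuousMap.continuousMapEquiv (.const X ‖h.toContinuousMap‖),
      fun y ↦ ?_⟩) L
  exact (le_abs_self _).trans (h.toContinuousMap.norm_coe_le_norm y)

variable [T2Space X] [MeasurableSpace X] [BorelSpace X]
  [T2Space Y] [MeasurableSpace Y] [BorelSpace Y]

theorem exists_innerRegular_map_eq_of_surjective [CompactSpace Y] {g : Y → X} (hg : Continuous g)
    (hg_surj : Function.Surjective g) (μ : Measure X) [IsFiniteMeasure μ] [μ.InnerRegular] :
    ∃ ν : Measure Y, ν.InnerRegular ∧ ν.map g = μ := by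
  have : CompactSpace X := hg_surj.compactSpace hg
  let g' : CocompactMap Y X := ⟨⟨g, hg⟩, by simp [Filter.cocompact_eq_bot]⟩
  obtain ⟨G, hG⟩ := exists_positiveLinearMap_comp_cocompactMap_eq g' hg_surj
    (CompactlySupportedContinuousMap.integralPositiveLinearMap μ)
  let ν := RealRMK.rieszMeasure G
  have hν_reg : ν.InnerRegular := inferInstance
  have : (ν.map g).InnerRegular := .map_of_continuous hg
  refine ⟨ν, hν_reg, Measure.ext_of_integral_eq_on_compactlySupported fun h ↦ ?_⟩
  calc ∫ x, h x ∂ν.map g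
      = ∫ y, h.comp g' y ∂ν := integral_map hg.aemeasurable h.continuous.aestronglyMeasurable
    _ = G (h.comp g') := RealRMK.integral_rieszMeasure G _
    _ = ∫ x, h x ∂μ := hG h

variable {f : Y → X}

theorem exists_innerRegular_map_eq_of_isCompact (hf : Continuous f) {C : Set Y} (hC : IsCompact C)
    (μ : Measure X) [IsFiniteMeasure μ] [μ.InnerRegular] (hμ : μ (f '' C)ᶜ = 0) :
    ∃ ν : Measure Y, ν.InnerRegular ∧ ν Cᶜ = 0 ∧ ν.map f = μ := by
  have : CompactSpace C := isCompact_iff_compactSpace.1 hC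
  have hfC : MeasurableSet (f '' C) := (hC.image hf).measurableSet
  have : (μ.comap ((↑) : f '' C → X)).InnerRegular :=
    innerRegular_comap_of_measurableEmbedding .subtypeVal (.subtype_coe hfC) μ
  have hg : Continuous (imageFactorization f C) := hf.restrict (mapsTo_image f C)
  obtain ⟨ν, hν_reg, hν_map⟩ := exists_innerRegular_map_eq_of_surjective hg
    imageFactorization_surjective (μ.comap ((↑) : f '' C → X))
  refine ⟨ν.map (↑), .map_of_continuous continuous_subtype_val, ?_, ?_⟩
  · rw [Measure.map_apply measurable_subtype_coe hC.measurableSet.compl]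
    simp
  · calc (ν.map (↑)).map f
        = (ν.map (imageFactorization f C)).map (↑) := by
          rw [Measure.map_map hf.measurable measurable_subtype_coe,
            Measure.map_map measurable_subtype_coe hg.measurable]
          rfl
      _ = μ.restrict (f '' C) := by rw [hν_map, map_comap_subtype_coe hfC]
      _ = μ := Measure.restrict_eq_self_of_ae_mem hμ

theorem exists_innerRegular_map_eq_of_isSigmaCompact (hf : Continuous f) {S : Set Y}
    (hS : IsSigmaCompact S) (μ : Measure X) [IsFiniteMeasureOnCompacts μ] [μ.InnerRegular]
    (hμ : μ (f '' S)ᶜ = 0) :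
    ∃ ν : Measure Y, ν.InnerRegular ∧ ν Sᶜ = 0 ∧ ν.map f = μ := by
  obtain ⟨C, hC, rfl⟩ := hS
  let K n := f '' C n
  have hK (n) : IsCompact (K n) := (hC n).image hf
  have hD_meas (n) : MeasurableSet (disjointed K n) := .disjointed (fun n ↦ (hK n).measurableSet) n
  have hlift (n) : ∃ ν : Measure Y, ν.InnerRegular ∧ ν (C n)ᶜ = 0 ∧
      ν.map f = μ.restrict (disjointed K n) := by
    have : IsFiniteMeasure (μ.restrict (disjointed K n)) := isFiniteMeasure_restrict.2
      (measure_ne_top_of_subset (disjointed_subset K n) (hK n).measure_ne_top)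
    refine exists_innerRegular_map_eq_of_isCompact hf (hC n) _ ?_
    rw [Measure.restrict_apply (hK n).measurableSet.compl,
      (disjoint_compl_left.mono_right (disjointed_subset K n)).inter_eq, measure_empty]
  choose ν hν_reg hν_null hν_map using hlift
  refine ⟨.sum ν, inferInstance, ?_, ?_⟩
  · rw [Measure.sum_apply_eq_zero]
    exact fun n ↦ measure_mono_null (compl_subset_compl.2 (subset_iUnion C n)) (hν_null n)
  · calc (Measure.sum ν).map f
        = .sum fun n ↦ μ.restrict (disjointed K n) := by
          simp only [Measure.map_sum hf.aemeasurable, hν_map]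
      _ = μ.restrict (f '' ⋃ n, C n) := by
          rw [← Measure.restrict_iUnion (disjoint_disjointed K) hD_meas, iUnion_disjointed,
            image_iUnion]
      _ = μ := Measure.restrict_eq_self_of_ae_mem hμ

end Lift

theorem existence_of_trajectory_statistical_solutions_restricted_general
    {X Y : Type*} [TopologicalSpace X] [T2Space X] [MeasurableSpace X] [BorelSpace X]
    [TopologicalSpace Y] [T2Space Y] [MeasurableSpace Y] [BorelSpace Y]
    {f : Y → X} (hf : Continuous f) {U : Set Y} {𝒦 : Set (Set X)}
    (h𝒦_image : ∀ K ∈ 𝒦, K ⊆ f '' U) (h𝒦_compact : ∀ K ∈ 𝒦, IsCompact (f ⁻¹' K ∩ U))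
    (μ : Measure X) [IsProbabilityMeasure μ] (hμ : InnerRegularMeasure μ)
    (hμ𝒦 : ⨆ K ∈ 𝒦, μ K = 1) :
    ∃ ρ : Measure Y, IsTrajectoryStatSol U ρ ∧ μ = ρ.map f := by
  obtain ⟨S, hS𝒦, hS, hμS⟩ := exists_countable_subset_iSup_measure_le μ 𝒦
  let V := f ⁻¹' ⋃₀ S ∩ U
  have hV : IsSigmaCompact V := by
    have hV_eq : V = ⋃ K ∈ S, f ⁻¹' K ∩ U := by
      simp only [V, sUnion_eq_biUnion, preimage_iUnion, iUnion_inter]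
    rw [hV_eq]
    exact isSigmaCompact_biUnion hS fun K hK ↦ (h𝒦_compact K (hS𝒦 hK)).isSigmaCompact
  have hfV : f '' V = ⋃₀ S := by
    rw [image_preimage_inter, inter_eq_left]
    exact sUnion_subset fun K hK ↦ h𝒦_image K (hS𝒦 hK)
  have hμV : μ (f '' V)ᶜ = 0 := by
    rw [prob_compl_eq_zero_iff (measurableSet_of_isSigmaCompact (hV.image hf)), hfV]
    exact le_antisymm prob_le_one (hμ𝒦 ▸ hμS)
  have : μ.InnerRegular := innerRegularMeasure_iff_innerRegular.1 hμ
  obtain ⟨ρ, hρ_reg, hρ_null, rfl⟩ := exists_innerRegular_map_eq_of_isSigmaCompact hf hV μ hμV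
  have hρ : IsProbabilityMeasure ρ := Measure.isProbabilityMeasure_of_map f
  have hV_meas : MeasurableSet V := measurableSet_of_isSigmaCompact hV
  exact ⟨ρ, ⟨hρ, innerRegularMeasure_iff_innerRegular.2 hρ_reg, V, inter_subset_right, hV_meas,
    (prob_compl_eq_zero_iff hV_meas).1 hρ_null⟩, rfl⟩

theorem existence_of_trajectory_statistical_solutions_restricted
    {X : Type*} [TopologicalSpace X] [T2Space X] [MeasurableSpace X] [BorelSpace X]
    (T : ℝ) (hT : 0 < T)
    [MeasurableSpace C(Icc (0 : ℝ) T, X)] [BorelSpace C(Icc (0 : ℝ) T, X)]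
    (𝒰 : Set C(Icc (0 : ℝ) T, X))
    (Pi0 : C(Icc (0 : ℝ) T, X) → X)
    (hPi0 : ∀ u : C(Icc (0 : ℝ) T, X), Pi0 u = u ⟨0, Set.left_mem_Icc.mpr hT.le⟩)
    (X₀ : Set X) (hX₀ : MeasurableSet X₀)
    -- (H1')
    (H1' : X₀ ⊆ Pi0 '' 𝒰)
    (𝒦' : Set (Set X))
    (h𝒦'_compact : ∀ K ∈ 𝒦', IsCompact K ∧ K ⊆ X₀)
    -- (H2')
    (H2' : ∀ μ₀ : Measure X, IsProbabilityMeasure μ₀ → InnerRegularMeasure μ₀ →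
      μ₀ X₀ = 1 → ∀ A : Set X, MeasurableSet A →
        μ₀ A = ⨆ (K : Set X) (_ : K ∈ 𝒦') (_ : K ⊆ A), μ₀ K)
    -- (H3')
    (H3' : ∀ K ∈ 𝒦', IsCompact (Pi0 ⁻¹' K ∩ 𝒰)) :
    ∀ μ₀ : Measure X, IsProbabilityMeasure μ₀ → InnerRegularMeasure μ₀ → μ₀ X₀ = 1 →
      ∃ ρ : Measure C(Icc (0 : ℝ) T, X),
        IsTrajectoryStatSol 𝒰 ρ ∧ μ₀ = Measure.map Pi0 ρ := by
  intro μ₀ _ hμ₀ hμ₀X₀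
  exact existence_of_trajectory_statistical_solutions_restricted_general
    (by rw [funext hPi0]; fun_prop) (fun K hK ↦ (h𝒦'_compact K hK).2.trans H1') H3' μ₀ hμ₀
    (by simpa using (H2' μ₀ inferInstance hμ₀ hμ₀X₀ univ .univ).symm)
end

section
/- Let C₀(ℝ²;ℝ) denote the Banach space of continuous functions ℝ² → ℝ vanishing at infinity, and endow its continuous dual space with the weak-* topology and the associated Borel σ-algebra. Then the set of continuous linear functionals Λ for which there exist f ∈ L¹(ℝ²) and k ∈ ℕ with f = 0 Lebesgue-almost everywhere outside the closed ball of radius k centred at 0, and Λ(g) = ∫_{ℝ²} g f dx for every g ∈ C₀(ℝ²;ℝ), is a Borel subset of the weak-* dual. (This states that the compactly supported integrable functions L¹_c(ℝ²) form a Borel subset of ℳ(ℝ²) with the weak-* topology.) -/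
open MeasureTheory ZeroAtInfty

local notation "E" => EuclideanSpace ℝ (Fin 2)

/-!
Integration against a density embeds `L¹(μ)` continuously and injectively into the weak-* dual of
`C₀`. Since `L¹(μ)` is a Polish space, the Lusin–Souslin theorem makes the image of each of its
closed subsets Borel. The densities vanishing off a fixed set form a closed subset, because
`L¹`-convergence implies almost everywhere convergence along a subsequence; the set of functionals
in question is the union of the images of countably many of these.

For injectivity, the indicator of a compact set `K` is the pointwise limit of the powers of a
compactly supported continuous function with values in `[0, 1]` that equals `1` exactly on `K`.
-/

open Filter Topology
open scoped ENNReal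

section TestFunctions

variable {X F : Type*} [TopologicalSpace X] [SecondCountableTopology X]
  [MeasurableSpace X] [NormedAddCommGroup F] [NormedSpace ℝ F] {μ : Measure X} {f : X → F}

theorem tendsto_integral_pow_smul_of_hasCompactSupport [OpensMeasurableSpace X]
    (hf : LocallyIntegrable f μ) {φ : C(X, ℝ)} (hφ : HasCompactSupport φ)
    (hφ01 : ∀ x, φ x ∈ Set.Icc (0 : ℝ) 1) :
    Tendsto (fun n : ℕ ↦ ∫ x, φ x ^ (n + 1) • f x ∂μ) atTop
      (𝓝 (∫ x in φ ⁻¹' {1}, f x ∂μ)) := by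
  have measurableSet_tsupport : MeasurableSet (tsupport φ) := (isClosed_tsupport φ).measurableSet
  rw [← integral_indicator (isClosed_singleton.preimage φ.continuous).measurableSet]
  refine tendsto_integral_of_dominated_convergence ((tsupport φ).indicator fun x ↦ ‖f x‖)
    (fun n ↦ (φ.continuous.pow (n + 1)).aestronglyMeasurable.smul hf.aestronglyMeasurable)
    ((integrable_indicator_iff measurableSet_tsupport).mpr (hf.integrableOn_isCompact hφ).norm)
    (fun n ↦ .of_forall fun x ↦ ?_) (.of_forall fun x ↦ ?_)
  · by_cases hx : x ∈ tsupport φ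
    · rw [Set.indicator_of_mem hx, norm_smul, norm_pow, Real.norm_of_nonneg (hφ01 x).1]
      exact mul_le_of_le_one_left (norm_nonneg _) (pow_le_one₀ (hφ01 x).1 (hφ01 x).2)
    · simp [image_eq_zero_of_notMem_tsupport hx, hx]
  · by_cases hx : φ x = 1
    · simp [hx]
    · have tendsto_pow : Tendsto (fun n : ℕ ↦ φ x ^ (n + 1)) atTop (𝓝 0) :=
        (tendsto_pow_atTop_nhds_zero_of_lt_one (hφ01 x).1 ((hφ01 x).2.lt_of_ne hx)).comp
          (tendsto_add_atTop_nat 1)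
      simpa [hx] using tendsto_pow.smul_const (f x)

theorem ae_eq_zero_of_integral_continuous_smul_eq_zero [LocallyCompactSpace X] [T2Space X]
    [BorelSpace X] [CompleteSpace F] (hf : LocallyIntegrable f μ)
    (h : ∀ g : X → ℝ, Continuous g → HasCompactSupport g → ∫ x, g x • f x ∂μ = 0) :
    f =ᵐ[μ] 0 := by
  refine ae_eq_zero_of_forall_setIntegral_isCompact_eq_zero' hf fun K hK ↦ ?_
  obtain ⟨φ, rfl, -, hφ, hφ01⟩ := exists_continuous_one_zero_of_isCompact_of_isGδ hK
    hK.isClosed.isGδ isClosed_empty (Set.disjoint_empty K)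
  refine tendsto_nhds_unique (tendsto_integral_pow_smul_of_hasCompactSupport hf hφ hφ01) ?_
  have integral_pow_eq_zero (n : ℕ) : ∫ x, φ x ^ (n + 1) • f x ∂μ = 0 :=
    h _ (φ.continuous.pow _) (hφ.comp_left (g := (· ^ (n + 1))) (by simp))
  simp only [integral_pow_eq_zero, tendsto_const_nhds]

end TestFunctions

theorem isClosed_setOf_ae_eq_zero_of_notMem {α F : Type*} [MeasurableSpace α]
    [NormedAddCommGroup F] {μ : Measure α} {p : ℝ≥0∞} [Fact (1 ≤ p)] (s : Set α) :
    IsClosed {f : Lp F p μ | ∀ᵐ x ∂μ, x ∉ s → f x = 0} := by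
  refine isSeqClosed_iff_isClosed.mp fun u f hu hlim ↦ ?_
  obtain ⟨ns, -, hns⟩ := (tendstoInMeasure_of_tendsto_Lp hlim).exists_seq_tendsto_ae
  filter_upwards [ae_all_iff.2 hu, hns] with x hux hlimx hxs
  exact tendsto_nhds_unique hlimx (by simp [hux _ hxs])

section ToLpTop

variable {X F : Type*} [TopologicalSpace X] [NormedAddCommGroup F]

theorem norm_zeroAtInfty_apply_le (g : C₀(X, F)) (x : X) : ‖g x‖ ≤ ‖g‖ :=
  g.toBCF.norm_coe_le_norm x

variable [MeasurableSpace X] [OpensMeasurableSpace X] [SecondCountableTopologyEither X F]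

theorem memLp_top_zeroAtInfty (g : C₀(X, F)) (μ : Measure X) : MemLp g ∞ μ :=
  memLp_top_of_bound (map_continuous g).aestronglyMeasurable ‖g‖
    (.of_forall (norm_zeroAtInfty_apply_le g))

theorem norm_toLp_zeroAtInfty_le (g : C₀(X, F)) (μ : Measure X) :
    ‖(memLp_top_zeroAtInfty g μ).toLp g‖ ≤ ‖g‖ := by
  rw [Lp.norm_toLp, eLpNorm_exponent_top]
  exact ENNReal.toReal_le_of_le_ofReal (norm_nonneg g)
    (eLpNormEssSup_le_of_ae_bound (.of_forall (norm_zeroAtInfty_apply_le g)))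

variable {𝕜 : Type*} [NormedField 𝕜] [NormedSpace 𝕜 F]

/-- The canonical map `C₀(X, F) → L^∞(μ)`, sending a function to its almost everywhere class. -/
noncomputable def zeroAtInftyToLpTop (μ : Measure X) : C₀(X, F) →L[𝕜] Lp F ∞ μ :=
  LinearMap.mkContinuous
    { toFun g := (memLp_top_zeroAtInfty g μ).toLp g
      map_add' g h := MemLp.toLp_add (memLp_top_zeroAtInfty g μ) (memLp_top_zeroAtInfty h μ)
      map_smul' c g := MemLp.toLp_const_smul c (memLp_top_zeroAtInfty g μ) }
    1 fun g ↦ (norm_toLp_zeroAtInfty_le g μ).trans_eq (one_mul _).symm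

theorem coeFn_zeroAtInftyToLpTop (μ : Measure X) (g : C₀(X, F)) :
    zeroAtInftyToLpTop (𝕜 := 𝕜) μ g =ᵐ[μ] g :=
  (memLp_top_zeroAtInfty g μ).coeFn_toLp

end ToLpTop

section Embedding

variable {X 𝕜 : Type*} [TopologicalSpace X] [MeasurableSpace X] [RCLike 𝕜]

section OpensMeasurable

variable [OpensMeasurableSpace X]

/-- The map from `L¹(μ)` to the weak-* dual of `C₀(X, 𝕜)` identifying a density `f` with the
functional `g ↦ ∫ g f dμ`. -/
noncomputable def l1ToWeakDual (μ : Measure X) : Lp 𝕜 1 μ →L[𝕜] WeakDual 𝕜 C₀(X, 𝕜) :=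
  NormedSpace.Dual.continuousLinearMapToWeakDual ∘L
    (zeroAtInftyToLpTop μ).precomp 𝕜 ∘L
      (ContinuousLinearMap.mul 𝕜 𝕜).flip.lpPairing μ 1 ∞

theorem l1ToWeakDual_apply (μ : Measure X) (f : Lp 𝕜 1 μ) (g : C₀(X, 𝕜)) :
    l1ToWeakDual μ f g = ∫ x, g x * f x ∂μ := by
  refine ((ContinuousLinearMap.mul 𝕜 𝕜).flip.lpPairing_eq_integral f _).trans
    (integral_congr_ae ?_)
  filter_upwards [coeFn_zeroAtInftyToLpTop (𝕜 := 𝕜) μ g] with x hx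
  simp [hx, mul_comm]

theorem mem_l1ToWeakDual_image_iff (μ : Measure X) (s : Set X) (Λ : WeakDual 𝕜 C₀(X, 𝕜)) :
    Λ ∈ l1ToWeakDual μ '' {f | ∀ᵐ x ∂μ, x ∉ s → f x = 0} ↔
      ∃ f : X → 𝕜, Integrable f μ ∧ (∀ᵐ x ∂μ, x ∉ s → f x = 0) ∧
        ∀ g : C₀(X, 𝕜), Λ g = ∫ x, g x * f x ∂μ := by
  constructor
  · rintro ⟨f, hfs, rfl⟩
    exact ⟨f, L1.integrable_coeFn f, hfs, l1ToWeakDual_apply μ f⟩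
  · rintro ⟨f, hf, hfs, hΛ⟩
    refine ⟨hf.toL1 f, ?_, DFunLike.ext _ _ fun g ↦ ?_⟩
    · filter_upwards [hf.coeFn_toL1, hfs] with x hx hfx hxs
      rw [hx, hfx hxs]
    · rw [l1ToWeakDual_apply, hΛ]
      refine integral_congr_ae ?_
      filter_upwards [hf.coeFn_toL1] with x hx
      rw [hx]

end OpensMeasurable

variable [LocallyCompactSpace X] [T2Space X] [SecondCountableTopology X] [BorelSpace X]

theorem l1ToWeakDual_injective (μ : Measure X) :
    Function.Injective (l1ToWeakDual μ : Lp 𝕜 1 μ → WeakDual 𝕜 C₀(X, 𝕜)) := by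
  refine (injective_iff_map_eq_zero _).mpr fun f hf ↦ (Lp.eq_zero_iff_ae_eq_zero).mpr ?_
  refine ae_eq_zero_of_integral_continuous_smul_eq_zero
    (L1.integrable_coeFn f).locallyIntegrable fun g hg hgc ↦ ?_
  let gC₀ : C₀(X, 𝕜) :=
    { toFun x := (g x : 𝕜)
      continuous_toFun := by fun_prop
      zero_at_infty' := (hgc.comp_left (g := ((↑) : ℝ → 𝕜)) (by simp)).is_zero_at_infty }
  calc ∫ x, g x • f x ∂μ = l1ToWeakDual μ f gC₀ := by
        simp only [l1ToWeakDual_apply, RCLike.real_smul_eq_coe_mul]; rfl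
    _ = 0 := by rw [hf]; rfl

theorem measurableSet_l1ToWeakDual_image (μ : Measure X) [IsSeparable μ] {S : Set (Lp 𝕜 1 μ)}
    (hS : IsClosed S) :
    MeasurableSet[borel (WeakDual 𝕜 C₀(X, 𝕜))] (l1ToWeakDual μ '' S) := by
  borelize (WeakDual 𝕜 C₀(X, 𝕜))
  have : Fact ((1 : ℝ≥0∞) ≠ ∞) := ⟨ENNReal.one_ne_top⟩
  exact hS.measurableSet_image_of_continuousOn_injOn (l1ToWeakDual μ).continuous.continuousOn
    (l1ToWeakDual_injective μ).injOn

theorem L1c_measurable_in_weakStar_dual_of_C0_general {ι : Type*} [Countable ι] (μ : Measure X)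
    [IsSeparable μ] (s : ι → Set X) :
    MeasurableSet[borel (WeakDual 𝕜 C₀(X, 𝕜))]
      {Λ : WeakDual 𝕜 C₀(X, 𝕜) |
        ∃ f : X → 𝕜, ∃ i : ι, Integrable f μ ∧ (∀ᵐ x ∂μ, x ∉ s i → f x = 0) ∧
          ∀ g : C₀(X, 𝕜), Λ g = ∫ x, g x * f x ∂μ} := by
  convert MeasurableSet.iUnion fun i ↦
    measurableSet_l1ToWeakDual_image (𝕜 := 𝕜) μ (isClosed_setOf_ae_eq_zero_of_notMem (s i)) using 1
  ext Λ
  rw [Set.mem_iUnion, Set.mem_ofPred_eq, exists_comm]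
  simp only [mem_l1ToWeakDual_image_iff]

end Embedding

/-- `L¹_c(ℝ²)`, the compactly supported integrable functions, form a Borel
subset of the weak-* dual of `C₀(ℝ²;ℝ)` (i.e. of the space of finite signed
Borel measures on `ℝ²` with the weak-* topology). -/
theorem L1c_measurable_in_weakStar_dual_of_C0 :
    MeasurableSet[borel (WeakDual ℝ C₀(E, ℝ))]
      {Λ : WeakDual ℝ C₀(E, ℝ) |
        ∃ f : E → ℝ, ∃ k : ℕ, Integrable f (volume : Measure E) ∧
          (∀ᵐ x : E ∂(volume : Measure E),
            x ∉ Metric.closedBall (0 : E) k → f x = 0) ∧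
          ∀ g : C₀(E, ℝ), Λ g = ∫ x : E, g x * f x} :=
  L1c_measurable_in_weakStar_dual_of_C0_general volume fun k : ℕ ↦ Metric.closedBall (0 : E) k
end
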